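/- Let φ be a divergence function with convex conjugate ψ, and β > 0. For a random variable X, the φ-divergence norm ‖X‖_{φ,β} := ρ_{φ,β}(|X|) is finite if and only if X belongs to the Orlicz space L^ψ, i.e., if and only if E[ψ(t·|X|)] < ∞ for some t > 0. -/

import Mathlib

open MeasureTheory
open scoped ENNReal

noncomputable section

/-- A divergence function: convex, lower semicontinuous `φ : ℝ → ℝ ∪ {∞}` with `φ 1 = 0`,
effective domain `[0, ∞)` and superlinear growth `φ x / x → ∞` as `x → ∞`. -/
structure IsDivergenceFunction (φ : ℝ → EReal) : Prop where
  convex : ∀ x y a b : ℝ, 0 < a → 0 < b → a + b = 1 →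
    φ (a * x + b * y) ≤ (a : EReal) * φ x + (b : EReal) * φ y
  lsc : LowerSemicontinuous φ
  ne_bot : ∀ x : ℝ, φ x ≠ ⊥
  one : φ 1 = 0
  domain : ∀ x : ℝ, φ x ≠ ⊤ ↔ 0 ≤ x
  superlinear : ∀ M : ℝ, ∃ N : ℝ, ∀ x : ℝ, N ≤ x → ((M * x : ℝ) : EReal) ≤ φ x

/-- The convex conjugate `ψ(y) = sup_z (y·z − φ(z))`, as an extended real number. -/
def psiE (φ : ℝ → EReal) (y : ℝ) : EReal := ⨆ z : ℝ, (((y * z : ℝ) : EReal) - φ z)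

/-- The convex conjugate, as a real number (it is finite for divergence functions). -/
def psiR (φ : ℝ → EReal) (y : ℝ) : ℝ := (psiE φ y).toReal

open Classical in
/-- The objective `t (β + μ + E ψ(X/t − μ))` of the φ-divergence risk measure;
the value is `⊤` when `ψ(X/t − μ)` fails to be integrable. -/
def rhoObj {Ω : Type*} [MeasurableSpace Ω] (φ : ℝ → EReal) (β : ℝ) (P : Measure Ω)
    (X : Ω → ℝ) (μ t : ℝ) : EReal :=
  if Integrable (fun ω => psiR φ (X ω / t - μ)) P then
    (((t * (β + μ + ∫ ω, psiR φ (X ω / t - μ) ∂P)) : ℝ) : EReal)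
  else ⊤

/-- The φ-divergence risk measure `ρ_{φ,β}(X) = inf_{μ ∈ ℝ, t > 0} t (β + μ + E ψ(X/t − μ))`. -/
def rhoDiv {Ω : Type*} [MeasurableSpace Ω] (φ : ℝ → EReal) (β : ℝ) (P : Measure Ω)
    (X : Ω → ℝ) : EReal :=
  ⨅ (μ : ℝ) (t : ℝ) (_ : 0 < t), rhoObj φ β P X μ t

lemma psiE_ne_top {φ : ℝ → EReal} (hφ : IsDivergenceFunction φ) (y : ℝ) : psiE φ y ≠ ⊤ := by
  obtain ⟨N, hN⟩ := hφ.superlinear y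
  obtain ⟨m, hm⟩ : ∃ m : ℝ, ∀ z ∈ Set.Icc 0 (max N 0), (m : EReal) ≤ φ z := by
    obtain ⟨z0, hz0, hmin⟩ := (hφ.lsc.lowerSemicontinuousOn (Set.Icc 0 (max N 0))).exists_isMinOn
      ⟨0, by simp⟩ isCompact_Icc
    refine ⟨(φ z0).toReal, fun z hz => ?_⟩
    rw [EReal.coe_toReal ((hφ.domain z0).2 hz0.1) (hφ.ne_bot z0)]
    exact hmin hz
  have hb : psiE φ y ≤ ((max 0 (|y| * max N 0 - m) : ℝ) : EReal) := by
    refine iSup_le fun z => ?_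
    by_cases hz : 0 ≤ z
    · lift φ z to ℝ using ⟨(hφ.domain z).2 hz, hφ.ne_bot z⟩ with r hr
      rw [← EReal.coe_sub, EReal.coe_le_coe_iff]
      rcases le_total N z with h | h
      · have := hN z h
        rw [← hr, EReal.coe_le_coe_iff] at this
        exact le_max_of_le_left (by linarith)
      · have h2 : z ≤ max N 0 := le_max_of_le_left h
        have := hm z ⟨hz, h2⟩
        rw [← hr, EReal.coe_le_coe_iff] at this
        have h3 : y * z ≤ |y| * max N 0 :=
          (mul_le_mul_of_nonneg_right (le_abs_self y) hz).trans
            (mul_le_mul_of_nonneg_left h2 (abs_nonneg y))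
        exact le_max_of_le_right (by linarith)
    · have : φ z = ⊤ := by
        by_contra h
        exact hz ((hφ.domain z).1 h)
      simp [this]
  exact ne_top_of_le_ne_top (EReal.coe_ne_top _) hb

lemma le_psiR {φ : ℝ → EReal} (hφ : IsDivergenceFunction φ) (y z : ℝ) (hz : 0 ≤ z) :
    y * z - (φ z).toReal ≤ psiR φ y := by
  have h : (((y * z : ℝ) : EReal) - φ z) ≤ psiE φ y :=
    le_iSup (fun z : ℝ => (((y * z : ℝ) : EReal) - φ z)) z
  rw [← EReal.coe_toReal ((hφ.domain z).2 hz) (hφ.ne_bot z), ← EReal.coe_sub] at h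
  rw [psiR, ← EReal.coe_le_coe_iff, EReal.coe_toReal (psiE_ne_top hφ y)]
  · exact h
  · intro hb
    rw [hb] at h
    exact EReal.coe_ne_bot _ (le_bot_iff.1 h)

lemma psiR_le {φ : ℝ → EReal} (hφ : IsDivergenceFunction φ) (y c : ℝ)
    (h : ∀ z, 0 ≤ z → y * z - (φ z).toReal ≤ c) : psiR φ y ≤ c := by
  have hb : psiE φ y ≤ (c : EReal) := by
    refine iSup_le fun z => ?_
    by_cases hz : 0 ≤ z
    · rw [← EReal.coe_toReal ((hφ.domain z).2 hz) (hφ.ne_bot z), ← EReal.coe_sub,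
        EReal.coe_le_coe_iff]
      exact h z hz
    · have : φ z = ⊤ := by
        by_contra h
        exact hz ((hφ.domain z).1 h)
      simp [this]
  have hnb : psiE φ y ≠ ⊥ := by
    intro hb
    have h : (((y * 1 : ℝ) : EReal) - φ 1) ≤ psiE φ y :=
      le_iSup (fun z : ℝ => (((y * z : ℝ) : EReal) - φ z)) 1
    rw [hb, hφ.one] at h
    simp at h
  rw [psiR, ← EReal.coe_le_coe_iff, EReal.coe_toReal (psiE_ne_top hφ y) hnb]
  exact hb

lemma psiR_mono {φ : ℝ → EReal} (hφ : IsDivergenceFunction φ) : Monotone (psiR φ) := by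
  intro a b hab
  refine psiR_le hφ _ _ fun z hz => le_trans ?_ (le_psiR hφ b z hz)
  have := mul_le_mul_of_nonneg_right hab hz
  linarith

lemma self_le_psiR {φ : ℝ → EReal} (hφ : IsDivergenceFunction φ) (y : ℝ) : y ≤ psiR φ y := by
  have := le_psiR hφ y 1 zero_le_one
  simpa [hφ.one] using this

lemma psiR_mid {φ : ℝ → EReal} (hφ : IsDivergenceFunction φ) (a b : ℝ) :
    psiR φ ((a + b) / 2) ≤ (psiR φ a + psiR φ b) / 2 := by
  refine psiR_le hφ _ _ fun z hz => ?_
  have h1 := le_psiR hφ a z hz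
  have h2 := le_psiR hφ b z hz
  linarith

variable {Ω : Type*} [MeasurableSpace Ω]

/-- The φ-divergence norm `‖X‖_{φ,β} = ρ_{φ,β}(|X|)` is finite if and only if `X`
belongs to the Orlicz space `L^ψ`, i.e. `E[ψ(t·|X|)] < ∞` for some `t > 0`. -/
theorem rhoDiv_finite_iff_orlicz (P : Measure Ω) [IsProbabilityMeasure P]
    (φ : ℝ → EReal) (hφ : IsDivergenceFunction φ) (β : ℝ) (hβ : 0 < β)
    (X : Ω → ℝ) (hXmeas : Measurable X) :
    rhoDiv φ β P (fun ω => |X ω|) ≠ ⊤ ↔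
      ∃ t : ℝ, 0 < t ∧ Integrable (fun ω => psiR φ (t * |X ω|)) P := by
  constructor
  · intro h
    obtain ⟨μ, t, ht, hI⟩ : ∃ μ t : ℝ, 0 < t ∧
        Integrable (fun ω => psiR φ (|X ω| / t - μ)) P := by
      by_contra! hcon
      apply h
      simp only [rhoDiv, iInf_eq_top]
      intro μ t ht
      simp only [rhoObj]
      rw [if_neg (hcon μ t ht)]
    refine ⟨1 / (2 * t), by positivity, ?_⟩
    have hdom : Integrable (fun ω => (psiR φ (|X ω| / t - μ) + psiR φ μ) / 2) P :=
      (hI.add (integrable_const _)).div_const 2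
    refine hdom.mono' ?_ (Filter.Eventually.of_forall fun ω => ?_)
    · exact ((psiR_mono hφ).measurable.comp
        (measurable_const.mul (measurable_norm.comp hXmeas))).aestronglyMeasurable
    · have h0 : 0 ≤ 1 / (2 * t) * |X ω| := by positivity
      have h1 := self_le_psiR hφ (1 / (2 * t) * |X ω|)
      rw [Real.norm_of_nonneg (h0.trans h1)]
      have h2 := psiR_mid hφ (|X ω| / t - μ) μ
      have h3 : (|X ω| / t - μ + μ) / 2 = 1 / (2 * t) * |X ω| := by
        field_simp
        ring
      rwa [h3] at h2
  · rintro ⟨t, ht, hI⟩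
    have hI' : Integrable (fun ω => psiR φ (|X ω| / t⁻¹ - 0)) P := by
      convert hI using 3 with ω
      rw [sub_zero, div_inv_eq_mul, mul_comm]
    have hle : rhoDiv φ β P (fun ω => |X ω|) ≤ rhoObj φ β P (fun ω => |X ω|) 0 t⁻¹ :=
      iInf_le_of_le 0 (iInf_le_of_le t⁻¹ (iInf_le _ (inv_pos.2 ht)))
    refine ne_top_of_le_ne_top ?_ hle
    simp only [rhoObj]
    rw [if_pos hI']
    exact EReal.coe_ne_top _
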